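/- Let p be a prime number and let B be a finite-dimensional ℚ_p-algebra with dim_{ℚ_p} B = R. Let 𝒪 ⊆ 𝒪ₘ be two ℤ_p-orders in B. Then for every ε > 0 there exists a constant C > 0 depending only on R and ε (and not on p, B, or the orders) such that C⁻¹ · p^{-ε} · [𝒪ₘ : 𝒪] ≤ [𝒪ₘ^× : 𝒪^×] ≤ C · p^{ε} · [𝒪ₘ : 𝒪], where [𝒪ₘ : 𝒪] denotes the (finite) index as additive groups and [𝒪ₘ^× : 𝒪^×] the index of the unit groups. -/

import Mathlib

/-- A `ℤ_[p]`-order in a finite-dimensional `ℚ_[p]`-algebra `B`: a subring of `B` that is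
stable under scaling by `ℤ_[p]`, finitely generated as a `ℤ_[p]`-module and contains a
`ℚ_[p]`-basis of `B`. -/
def IsZpOrder (p : ℕ) [Fact p.Prime] {B : Type*} [Ring B] [Algebra ℚ_[p] B]
    (O : Subring B) : Prop :=
  (∀ (c : ℤ_[p]) (x : B), x ∈ O → algebraMap ℚ_[p] B (c : ℚ_[p]) * x ∈ O) ∧
  (∃ s : Finset B, (s : Set B) ⊆ (O : Set B) ∧
    ∀ x ∈ O, ∃ c : B → ℤ_[p], x = ∑ b ∈ s, algebraMap ℚ_[p] B (c b) * b) ∧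
  Submodule.span ℚ_[p] (O : Set B) = ⊤

/-- The index `[𝒪ₘ^× : 𝒪^×]` of the unit groups, realised as the number of right cosets:
the cardinality of the quotient of the set of units of `𝒪ₘ` by the relation of differing by
right multiplication by a unit of `𝒪`. -/
noncomputable def unitIndex {B : Type*} [Ring B] (O Om : Subring B) : ℕ :=
  Nat.card (Quot (fun (x y : {x : B // x ∈ Om ∧ ∃ v ∈ Om, x * v = 1 ∧ v * x = 1}) =>
    ∃ γ v : B, γ ∈ O ∧ v ∈ O ∧ γ * v = 1 ∧ v * γ = 1 ∧ (x : B) = (y : B) * γ))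

/-!
Choose a nonzero nonunit `c ∈ ℤ_p` so divisible that `J = c 𝒪ₘ` lies in `p 𝒪`. Since `J` lies in
the kernels of the reductions `𝒪 → T = 𝒪 / p 𝒪` and `𝒪ₘ → T' = 𝒪ₘ / p 𝒪ₘ`, through which units
lift, `u ↦ u - 1` compares the congruence subgroup `1 + J` with `J` on both sides, giving
`[𝒪^× : 1 + J] · |T| = [𝒪 : J] · |T^×|` and the same identity for `𝒪ₘ` and `T'`. Dividing,
`[𝒪ₘ^× : 𝒪^×] · |T^×| · |T'| = [𝒪ₘ : 𝒪] · |T'^×| · |T|`. It remains to bound `|T| / |T^×|` for a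
finite algebra `T` of dimension `d` over a field with `q` elements: if `q > d`, an average over
the translates `t - a` shows that at least `(q - d) / q` of the elements are units, and if `q ≤ d`
then `|T| = q ^ d ≤ d ^ d`.
-/

section FiniteAlgebra

variable (F : Type*) [Field F] {T : Type*} [Ring T] [Algebra F T] [Module.Finite F T]

lemma spectrum_subset_rootSet_minpoly (a : T) : spectrum F a ⊆ (minpoly F a).rootSet F := by
  intro t ht
  have : Nontrivial T := not_subsingleton_iff_nontrivial.1 fun _ ↦ by
    simp [spectrum.of_subsingleton] at ht
  have eval_mem : (minpoly F a).eval t ∈ spectrum F (Polynomial.aeval a (minpoly F a)) :=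
    spectrum.subset_polynomial_aeval a _ ⟨t, ht, rfl⟩
  rw [minpoly.aeval, spectrum.zero_eq] at eval_mem
  exact (Polynomial.mem_rootSet_of_ne (minpoly.ne_zero_of_finite F a)).2 eval_mem

lemma ncard_spectrum_le_finrank (a : T) : (spectrum F a).ncard ≤ Module.finrank F T :=
  calc (spectrum F a).ncard
      ≤ ((minpoly F a).rootSet F).ncard :=
        Set.ncard_le_ncard (spectrum_subset_rootSet_minpoly F a) (Polynomial.rootSet_finite _ _)
    _ ≤ (minpoly F a).natDegree := Polynomial.ncard_rootSet_le _ _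
    _ ≤ Module.finrank F T := minpoly.natDegree_le a

variable [Finite F] (T)

lemma card_mul_card_sub_finrank_le :
    Nat.card T * (Nat.card F - Module.finrank F T) ≤ Nat.card F * Nat.card Tˣ := by
  have : Finite T := Module.finite_of_finite F
  have := Fintype.ofFinite T
  have le_card_resolventSet (a : T) :
      Nat.card F - Module.finrank F T ≤ Nat.card (resolventSet F a) := by
    have card_add_ncard_spectrum : (resolventSet F a).ncard + (spectrum F a).ncard = Nat.card F :=
      Set.ncard_add_ncard_compl _
    have := ncard_spectrum_le_finrank F a
    rw [Nat.card_coe_set_eq]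
    omega
  let toUnit (x : Σ a : T, resolventSet F a) : F × Tˣ := (x.2, x.2.2.unit)
  have toUnit_injective : Function.Injective toUnit := by
    rintro ⟨a, t, ht⟩ ⟨b, s, hs⟩ h
    obtain ⟨rfl, h_unit⟩ := Prod.ext_iff.1 h
    obtain rfl : a = b := sub_right_injective (congrArg Units.val h_unit)
    rfl
  calc Nat.card T * (Nat.card F - Module.finrank F T)
      = ∑ _a : T, (Nat.card F - Module.finrank F T) := by simp
    _ ≤ ∑ a : T, Nat.card (resolventSet F a) := Finset.sum_le_sum fun a _ ↦ le_card_resolventSet a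
    _ = Nat.card (Σ a : T, resolventSet F a) := Nat.card_sigma.symm
    _ ≤ Nat.card (F × Tˣ) := Nat.card_le_card_of_injective toUnit toUnit_injective
    _ = Nat.card F * Nat.card Tˣ := Nat.card_prod _ _

lemma card_le_mul_card_units :
    Nat.card T ≤ (Module.finrank F T + 1) ^ Module.finrank F T * Nat.card Tˣ := by
  have : Finite T := Module.finite_of_finite F
  have card_eq : Nat.card T = Nat.card F ^ Module.finrank F T := Module.natCard_eq_pow_finrank
  have units_pos : 0 < Nat.card Tˣ := Nat.card_pos
  have averaging := card_mul_card_sub_finrank_le F T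
  set d := Module.finrank F T
  set q := Nat.card F
  rcases Nat.lt_or_ge d q with hdq | hqd
  · rcases Nat.eq_zero_or_pos d with hd | hd
    · simp [card_eq, hd, Nat.one_le_iff_ne_zero, units_pos.ne']
    have q_le : q ≤ (d + 1) * (q - d) := by
      obtain ⟨k, hk⟩ := Nat.exists_eq_add_of_lt hdq
      rw [show q - d = k + 1 by omega]
      nlinarith
    have card_le : Nat.card T ≤ (d + 1) * Nat.card Tˣ := by
      refine Nat.le_of_mul_le_mul_right ?_ (Nat.sub_pos_of_lt hdq)
      calc Nat.card T * (q - d) ≤ q * Nat.card Tˣ := averaging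
        _ ≤ (d + 1) * (q - d) * Nat.card Tˣ := by gcongr
        _ = (d + 1) * Nat.card Tˣ * (q - d) := by ring
    exact card_le.trans (by gcongr; exact Nat.le_self_pow hd.ne' _)
  · calc Nat.card T = q ^ d := card_eq
      _ ≤ (d + 1) ^ d := by gcongr; omega
      _ ≤ (d + 1) ^ d * Nat.card Tˣ := Nat.le_mul_of_pos_right _ units_pos

end FiniteAlgebra

section LocalRing

open IsLocalRing TensorProduct

variable (A S : Type*) [CommRing A] [IsLocalRing A] [Ring S] [Algebra A S]

lemma includeRight_residueField_surjective :
    Function.Surjective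
      (Algebra.TensorProduct.includeRight : S →ₐ[A] ResidueField A ⊗[A] S) :=
  TensorProduct.mk_surjective A S (ResidueField A) residue_surjective

instance isLocalHom_includeRight_residueField [Module.Finite A S] :
    IsLocalHom (Algebra.TensorProduct.includeRight : S →ₐ[A] ResidueField A ⊗[A] S) := by
  set π : S →ₐ[A] ResidueField A ⊗[A] S := Algebra.TensorProduct.includeRight
  have exists_right_inv {x : S} {y : ResidueField A ⊗[A] S} (hxy : π x * y = 1) :
      ∃ z, x * z = 1 := by
    -- Nakayama: `x S = S` because this holds modulo the maximal ideal.
    have range_eq_top : LinearMap.range (LinearMap.mulLeft A x) = ⊤ := by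
      rw [← map_tensorProduct_mk_eq_top, ← LinearMap.range_comp, LinearMap.range_eq_top]
      intro w
      obtain ⟨z, hz⟩ := includeRight_residueField_surjective A S (y * w)
      refine ⟨z, ?_⟩
      calc π (x * z) = π x * (y * w) := by rw [map_mul, ← hz]
        _ = w := by rw [← mul_assoc, hxy, one_mul]
    exact LinearMap.range_eq_top.1 range_eq_top 1
  refine ⟨fun x ⟨u, hu⟩ ↦ ?_⟩
  obtain ⟨y, hxy⟩ := exists_right_inv (x := x) (y := ↑u⁻¹) (by rw [← hu, u.mul_inv])
  have π_y_eq : π y = ↑u⁻¹ := by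
    rw [← u.mul_right_inj, hu, ← map_mul, hxy, map_one, ← hu, u.mul_inv]
  obtain ⟨z, hyz⟩ := exists_right_inv (x := y) (y := u) (by rw [π_y_eq, u.inv_mul])
  exact ⟨⟨x, y, hxy, by rwa [left_inv_eq_right_inv hxy hyz]⟩, rfl⟩

variable {A}

lemma includeRight_residueField_smul_eq_zero {a : A} (ha : a ∈ maximalIdeal A) (x : S) :
    (Algebra.TensorProduct.includeRight : S →ₐ[A] ResidueField A ⊗[A] S) (a • x) = 0 := by
  rw [Algebra.TensorProduct.includeRight_apply, tmul_smul, smul_tmul', Algebra.smul_def,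
    ResidueField.algebraMap_eq, (residue_eq_zero_iff a).2 ha, zero_mul, zero_tmul]

variable (A) in
lemma card_residueField_tensor_le [Finite (ResidueField A)] [Module.Free A S] [Module.Finite A S] :
    Nat.card (ResidueField A ⊗[A] S) ≤
      (Module.finrank A S + 1) ^ Module.finrank A S * Nat.card (ResidueField A ⊗[A] S)ˣ := by
  simpa only [Module.finrank_baseChange] using
    card_le_mul_card_units (ResidueField A) (ResidueField A ⊗[A] S)

end LocalRing

section Units

lemma unitsMap_surjective {M N : Type*} [Monoid M] [Monoid N] {f : M →* N} [IsLocalHom f]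
    (hf : Function.Surjective f) : Function.Surjective (Units.map f) := fun v ↦ by
  obtain ⟨x, hx⟩ := hf v
  obtain ⟨u, rfl⟩ : IsUnit x := IsUnit.of_map f x (hx ▸ v.isUnit)
  exact ⟨u, Units.ext hx⟩

lemma le_mul_of_mul_card_eq {T T' : Type*} [Monoid T] [Monoid T'] [Finite T] [Finite T']
    {C N U : ℕ}
    (h : U * (Nat.card Tˣ * Nat.card T') = N * (Nat.card T'ˣ * Nat.card T))
    (hT' : Nat.card T' ≤ C * Nat.card T'ˣ) : N ≤ C * U := by
  have units_le : Nat.card Tˣ ≤ Nat.card T := Nat.card_le_card_of_injective _ Units.val_injective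
  have pos : 0 < Nat.card T'ˣ * Nat.card T := Nat.mul_pos Nat.card_pos Nat.card_pos
  refine Nat.le_of_mul_le_mul_right ?_ pos
  calc N * (Nat.card T'ˣ * Nat.card T) = U * (Nat.card Tˣ * Nat.card T') := h.symm
    _ ≤ U * (Nat.card T * (C * Nat.card T'ˣ)) := by gcongr
    _ = C * U * (Nat.card T'ˣ * Nat.card T) := by ring

end Units

section Congruence

variable {S : Type*} [Ring S]

/-- The congruence subgroup `{u ∈ Sˣ | u ≡ 1 mod I}` of a left ideal `I`. -/
def congruenceSubgroup (I : Ideal S) : Subgroup Sˣ where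
  carrier := {u | (u : S) - 1 ∈ I}
  one_mem' := by simp
  mul_mem' {u v} hu hv := by
    have : (↑(u * v) : S) - 1 = u * (v - 1) + (u - 1) := by rw [Units.val_mul]; noncomm_ring
    simpa only [Set.mem_ofPred_eq, this] using I.add_mem (I.mul_mem_left _ hv) hu
  inv_mem' {u} hu := by
    have : (↑u⁻¹ : S) - 1 = -(↑u⁻¹ * (u - 1)) := by rw [mul_sub, u.inv_mul]; noncomm_ring
    simpa only [Set.mem_ofPred_eq, this] using I.neg_mem (I.mul_mem_left _ hu)

lemma mem_congruenceSubgroup {I : Ideal S} {u : Sˣ} :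
    u ∈ congruenceSubgroup I ↔ (u : S) - 1 ∈ I := Iff.rfl

lemma inv_mul_mem_congruenceSubgroup {I : Ideal S} {u v : Sˣ} :
    u⁻¹ * v ∈ congruenceSubgroup I ↔ (v : S) - u ∈ I := by
  have : (↑(u⁻¹ * v) : S) - 1 = ↑u⁻¹ * (v - u) := by rw [mul_sub, u.inv_mul, Units.val_mul]
  rw [mem_congruenceSubgroup, this]
  refine ⟨fun h ↦ ?_, I.mul_mem_left _⟩
  simpa using I.mul_mem_left u h

lemma relIndex_congruenceSubgroup {I J : Ideal S} (hJ : ∀ x ∈ J, IsUnit (1 + x)) :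
    (congruenceSubgroup I).relIndex (congruenceSubgroup J) =
      I.toAddSubgroup.relIndex J.toAddSubgroup := by
  let e : congruenceSubgroup J ≃ J.toAddSubgroup :=
    { toFun u := ⟨u.1 - 1, u.2⟩
      invFun x := ⟨(hJ x x.2).unit, by simp [mem_congruenceSubgroup]⟩
      left_inv u := Subtype.ext (Units.ext (by simp))
      right_inv x := Subtype.ext (by simp) }
  refine Nat.card_congr (Quotient.congr e fun u v ↦ ?_)
  rw [QuotientGroup.leftRel_apply, QuotientAddGroup.leftRel_apply, Subgroup.mem_subgroupOf,
    AddSubgroup.mem_addSubgroupOf]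
  have coe_sub : ((-e u + e v : J.toAddSubgroup) : S) = (v : Sˣ) - (u : Sˣ) := by
    simp only [e, Equiv.coe_fn_mk, AddSubgroup.coe_add, AddSubgroup.coe_neg]
    abel
  rw [coe_sub]
  exact inv_mul_mem_congruenceSubgroup

variable {T : Type*} [Ring T]

lemma isUnit_one_add_of_mem_ker (π : S →+* T) [IsLocalHom π] {x : S} (hx : x ∈ RingHom.ker π) :
    IsUnit (1 + x) :=
  IsUnit.of_map π _ (by simp [RingHom.mem_ker.1 hx])

lemma index_congruenceSubgroup_ker {π : S →+* T} [IsLocalHom π] (hπ : Function.Surjective π) :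
    (congruenceSubgroup (RingHom.ker π)).index = Nat.card Tˣ := by
  have ker_eq : congruenceSubgroup (RingHom.ker π) = (Units.map (π : S →* T)).ker := by
    ext u
    simp [mem_congruenceSubgroup, RingHom.mem_ker, MonoidHom.mem_ker, Units.ext_iff, sub_eq_zero]
  rw [ker_eq, Subgroup.index_ker,
    MonoidHom.range_eq_top.2 (unitsMap_surjective (f := (π : S →* T)) hπ), Subgroup.card_top]

lemma index_ker_toAddSubgroup {π : S →+* T} (hπ : Function.Surjective π) :
    (RingHom.ker π).toAddSubgroup.index = Nat.card T := by
  have ker_eq : (RingHom.ker π).toAddSubgroup = (π : S →+ T).ker := rfl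
  rw [ker_eq, AddSubgroup.index_ker, AddMonoidHom.range_eq_top.2 hπ, AddSubgroup.card_top]

lemma index_congruenceSubgroup_mul_card {π : S →+* T} [IsLocalHom π]
    (hπ : Function.Surjective π) {I : Ideal S} (hI : I ≤ RingHom.ker π) :
    (congruenceSubgroup I).index * Nat.card T = I.toAddSubgroup.index * Nat.card Tˣ := by
  have hI_add : I.toAddSubgroup ≤ (RingHom.ker π).toAddSubgroup := hI
  have hI_units : congruenceSubgroup I ≤ congruenceSubgroup (RingHom.ker π) := fun u hu ↦ hI hu
  rw [← Subgroup.relIndex_mul_index hI_units, ← AddSubgroup.relIndex_mul_index hI_add,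
    relIndex_congruenceSubgroup fun x ↦ isUnit_one_add_of_mem_ker π,
    index_congruenceSubgroup_ker hπ, index_ker_toAddSubgroup hπ]
  ring

variable {S' : Type*} [Ring S'] {φ : S →+* S'} {J : Ideal S'}

lemma index_comap_mul_index_range (hJφ : ∀ x ∈ J, x ∈ φ.range) :
    (J.comap φ).toAddSubgroup.index * (φ : S →+ S').range.index = J.toAddSubgroup.index := by
  have comap_eq : (J.comap φ).toAddSubgroup = J.toAddSubgroup.comap (φ : S →+ S') := rfl
  have hJφ_add : J.toAddSubgroup ≤ (φ : S →+ S').range := hJφ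
  rw [comap_eq, AddSubgroup.index_comap, AddSubgroup.relIndex_mul_index hJφ_add]

lemma index_congruenceSubgroup_comap_mul_index_range (π : S →+* T) [IsLocalHom π]
    (hJφ : ∀ x ∈ J, x ∈ φ.range) (hJπ : J.comap φ ≤ RingHom.ker π) :
    (congruenceSubgroup (J.comap φ)).index * (Units.map (φ : S →* S')).range.index =
      (congruenceSubgroup J).index := by
  have comap_eq : congruenceSubgroup (J.comap φ) =
      (congruenceSubgroup J).comap (Units.map (φ : S →* S')) := by
    ext u
    simp [mem_congruenceSubgroup]
  have le_range : congruenceSubgroup J ≤ (Units.map (φ : S →* S')).range := by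
    intro u hu
    obtain ⟨y, hy⟩ := hJφ _ hu
    have hy_mem : y ∈ J.comap φ := Ideal.mem_comap.2 (hy ▸ hu)
    refine ⟨(isUnit_one_add_of_mem_ker π (hJπ hy_mem)).unit, Units.ext ?_⟩
    simp [hy]
  rw [comap_eq, Subgroup.index_comap, Subgroup.relIndex_mul_index le_range]

variable {T' : Type*} [Ring T']

theorem index_range_units_mul_card {π : S →+* T} {π' : S' →+* T'} [IsLocalHom π] [IsLocalHom π']
    (hπ : Function.Surjective π) (hπ' : Function.Surjective π')
    (hJφ : ∀ x ∈ J, x ∈ φ.range) (hJπ : J.comap φ ≤ RingHom.ker π) (hJπ' : J ≤ RingHom.ker π')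
    (hJ : J.toAddSubgroup.index ≠ 0) :
    (Units.map (φ : S →* S')).range.index * (Nat.card Tˣ * Nat.card T') =
      (φ : S →+ S').range.index * (Nat.card T'ˣ * Nat.card T) := by
  have add_index := index_comap_mul_index_range hJφ
  have units_index := index_congruenceSubgroup_comap_mul_index_range π hJφ hJπ
  have card_S := index_congruenceSubgroup_mul_card hπ hJπ
  have card_S' := index_congruenceSubgroup_mul_card hπ' hJπ'
  have comap_index_ne_zero : (J.comap φ).toAddSubgroup.index ≠ 0 :=
    left_ne_zero_of_mul (add_index ▸ hJ)
  set N := (φ : S →+ S').range.index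
  set U := (Units.map (φ : S →* S')).range.index
  refine Nat.eq_of_mul_eq_mul_left (Nat.pos_of_ne_zero comap_index_ne_zero) ?_
  calc (J.comap φ).toAddSubgroup.index * (U * (Nat.card Tˣ * Nat.card T'))
      = (J.comap φ).toAddSubgroup.index * Nat.card Tˣ * U * Nat.card T' := by ring
    _ = (congruenceSubgroup (J.comap φ)).index * U * Nat.card T' * Nat.card T := by
        rw [← card_S]; ring
    _ = J.toAddSubgroup.index * Nat.card T'ˣ * Nat.card T := by rw [units_index, card_S']
    _ = (J.comap φ).toAddSubgroup.index * (N * (Nat.card T'ˣ * Nat.card T)) := by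
        rw [← add_index]; ring

end Congruence

section DiscreteValuationRing

open IsLocalRing TensorProduct

lemma finite_quotient_span_algebraMap {A : Type*} (S : Type*) [CommRing A] [Ring S] [Algebra A S]
    [Module.Finite A S] (c : A) [Finite (A ⧸ Ideal.span {c})] :
    Finite (S ⧸ Ideal.span {algebraMap A S c}) := by
  have : Finite (S ⧸ Ideal.span {c} • (⊤ : Submodule A S)) :=
    Submodule.finite_quotient_smul _ Module.Finite.fg_top
  have le : Ideal.span {c} • ⊤ ≤ (Ideal.span {algebraMap A S c}).restrictScalars A := by
    rw [Submodule.ideal_span_singleton_smul]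
    rintro _ ⟨x, -, rfl⟩
    exact Ideal.mem_span_singleton'.2 ⟨x, by simp [Algebra.smul_def, Algebra.commutes]⟩
  exact Finite.of_surjective _ (Submodule.factor_surjective le)

variable {A : Type*} [CommRing A] [IsDomain A] [IsDiscreteValuationRing A]
  [Finite (ResidueField A)]

lemma finite_quotient_span_singleton {c : A} (hc : c ≠ 0) : Finite (A ⧸ Ideal.span {c}) := by
  obtain ⟨ϖ, hϖ⟩ := IsDiscreteValuationRing.exists_irreducible A
  obtain ⟨n, hn⟩ := IsDiscreteValuationRing.ideal_eq_span_pow_irreducible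
    (mt Ideal.span_singleton_eq_bot.1 hc) hϖ
  refine finite_quotient_iff.2 ⟨n, ?_⟩
  rw [hn, hϖ.maximalIdeal_eq, Ideal.span_singleton_pow]

variable {S S' : Type*} [Ring S] [Ring S'] [Algebra A S] [Algebra A S'] [Module.Finite A S']
  {φ : S →ₐ[A] S'} {a : A}

lemma exists_ideal_le_smul_range (ha : a ≠ 0) (smul_mem : ∀ x, a • x ∈ φ.range) :
    ∃ ϖ ∈ maximalIdeal A, ∃ J : Ideal S', J.toAddSubgroup.index ≠ 0 ∧
      ∀ x ∈ J, ∃ y, φ (ϖ • y) = x := by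
  obtain ⟨ϖ, hϖ⟩ := IsDiscreteValuationRing.exists_irreducible A
  let J := Ideal.span {algebraMap A S' (ϖ * a)}
  have := finite_quotient_span_singleton (mul_ne_zero hϖ.ne_zero ha)
  have : Finite (S' ⧸ J.toAddSubgroup) := finite_quotient_span_algebraMap S' (ϖ * a)
  refine ⟨ϖ, (mem_maximalIdeal ϖ).2 hϖ.not_isUnit, J, AddSubgroup.index_ne_zero_of_finite, ?_⟩
  intro x hx
  obtain ⟨z, rfl⟩ := Ideal.mem_span_singleton'.1 hx
  obtain ⟨y, hy⟩ := smul_mem z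
  have hy : φ y = a • z := hy
  refine ⟨y, ?_⟩
  rw [map_smul, hy, ← Algebra.commutes, ← Algebra.smul_def, mul_smul]

variable [Module.Finite A S]

lemma index_range_units_mul_card_residueField_tensor (hφ : Function.Injective φ) (ha : a ≠ 0)
    (smul_mem : ∀ x, a • x ∈ φ.range) :
    (Units.map (φ : S →* S')).range.index *
        (Nat.card (ResidueField A ⊗[A] S)ˣ * Nat.card (ResidueField A ⊗[A] S')) =
      (φ : S →+ S').range.index *
        (Nat.card (ResidueField A ⊗[A] S')ˣ * Nat.card (ResidueField A ⊗[A] S)) := by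
  obtain ⟨ϖ, hϖ, J, hJ, hJφ⟩ := exists_ideal_le_smul_range ha smul_mem
  let π : S →ₐ[A] ResidueField A ⊗[A] S := Algebra.TensorProduct.includeRight
  let π' : S' →ₐ[A] ResidueField A ⊗[A] S' := Algebra.TensorProduct.includeRight
  refine index_range_units_mul_card (φ := (φ : S →+* S')) (J := J)
    (π := (π : S →+* _)) (π' := (π' : S' →+* _))
    (includeRight_residueField_surjective A S) (includeRight_residueField_surjective A S')
    (fun x hx ↦ ?_) (fun x hx ↦ ?_) (fun x hx ↦ ?_) hJ
  · obtain ⟨y, rfl⟩ := hJφ x hx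
    exact ⟨_, rfl⟩
  · obtain ⟨y, hy⟩ := hJφ _ hx
    obtain rfl := hφ hy
    exact includeRight_residueField_smul_eq_zero S hϖ y
  · obtain ⟨y, rfl⟩ := hJφ x hx
    rw [map_smul]
    exact includeRight_residueField_smul_eq_zero S' hϖ (φ y)

lemma index_range_le_mul_index_range_units [Module.Free A S'] (hφ : Function.Injective φ)
    (ha : a ≠ 0) (smul_mem : ∀ x, a • x ∈ φ.range) :
    (φ : S →+ S').range.index ≤ (Module.finrank A S' + 1) ^ Module.finrank A S' *
      (Units.map (φ : S →* S')).range.index :=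
  have : Finite (ResidueField A ⊗[A] S) := Module.finite_of_finite (ResidueField A)
  have : Finite (ResidueField A ⊗[A] S') := Module.finite_of_finite (ResidueField A)
  le_mul_of_mul_card_eq (index_range_units_mul_card_residueField_tensor hφ ha smul_mem)
    (card_residueField_tensor_le A S')

lemma index_range_units_le_mul_index_range [Module.Free A S] (hφ : Function.Injective φ)
    (ha : a ≠ 0) (smul_mem : ∀ x, a • x ∈ φ.range) :
    (Units.map (φ : S →* S')).range.index ≤ (Module.finrank A S + 1) ^ Module.finrank A S *
      (φ : S →+ S').range.index :=
  have : Finite (ResidueField A ⊗[A] S) := Module.finite_of_finite (ResidueField A)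
  have : Finite (ResidueField A ⊗[A] S') := Module.finite_of_finite (ResidueField A)
  le_mul_of_mul_card_eq (index_range_units_mul_card_residueField_tensor hφ ha smul_mem).symm
    (card_residueField_tensor_le A S)

end DiscreteValuationRing

section Lattice

variable {A K B : Type*} [CommRing A] [IsDomain A] [Field K] [Algebra A K] [IsFractionRing A K]

section Module

variable [AddCommGroup B] [Module A B] [Module K B] [IsScalarTower A K B]

lemma exists_smul_mem_of_isLattice (M N : Submodule A B) [Submodule.IsLattice K M] (hN : N.FG) :
    ∃ a : A, a ≠ 0 ∧ ∀ x ∈ N, a • x ∈ M := by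
  have : Module.Finite A N := Module.Finite.iff_fg.2 hN
  have quotient_torsion : Module.IsTorsion A (N ⧸ M.submoduleOf N) := by
    intro y
    obtain ⟨x, rfl⟩ := Submodule.Quotient.mk_surjective _ y
    obtain ⟨t, ht⟩ := multiple_mem_span_of_mem_localization_span (nonZeroDivisors A) K
      (M : Set B) x (Submodule.IsLattice.span_eq_top (A := K) (M := M) ▸ Submodule.mem_top)
    rw [Submodule.span_eq] at ht
    exact ⟨t, (Submodule.Quotient.mk_eq_zero _).2 ht⟩
  obtain ⟨a, ha_annihilates, ha⟩ := Submodule.annihilator_top_inter_nonZeroDivisors quotient_torsion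
  refine ⟨a, nonZeroDivisors.ne_zero ha, fun x hx ↦ ?_⟩
  have smul_eq_zero : a • (M.submoduleOf N).mkQ ⟨x, hx⟩ = 0 :=
    Submodule.mem_annihilator.1 ha_annihilates _ Submodule.mem_top
  rw [← map_smul] at smul_eq_zero
  exact (Submodule.Quotient.mk_eq_zero (M.submoduleOf N)).1 smul_eq_zero

variable (K) in
lemma finrank_of_isLattice [IsPrincipalIdealRing A] (M : Submodule A B)
    [Submodule.IsLattice K M] : Module.finrank A M = Module.finrank K B := by
  rw [Module.finrank, Submodule.IsLattice.rank' K M, Module.finrank]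

end Module

variable [Ring B] [Algebra A B] [Algebra K B] [IsScalarTower A K B]
  [IsDiscreteValuationRing A] [Finite (IsLocalRing.ResidueField A)]

variable (K) in
theorem index_range_inclusion_bounds {O Om : Subalgebra A B} [Submodule.IsLattice K O.toSubmodule]
    [Submodule.IsLattice K Om.toSubmodule] (hle : O ≤ Om) :
    let N := (Subalgebra.inclusion hle : O →+ Om).range.index
    let U := (Units.map (Subalgebra.inclusion hle : O →* Om)).range.index
    let C := (Module.finrank K B + 1) ^ Module.finrank K B
    N ≤ C * U ∧ U ≤ C * N := by
  have : Module.Finite A O := Submodule.IsLattice.finite K O.toSubmodule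
  have : Module.Finite A Om := Submodule.IsLattice.finite K Om.toSubmodule
  have : Module.Free A O := Submodule.IsLattice.free K O.toSubmodule
  have : Module.Free A Om := Submodule.IsLattice.free K Om.toSubmodule
  have finrank_O : Module.finrank A O = Module.finrank K B := finrank_of_isLattice K O.toSubmodule
  have finrank_Om : Module.finrank A Om = Module.finrank K B :=
    finrank_of_isLattice K Om.toSubmodule
  obtain ⟨a, ha, smul_mem⟩ := exists_smul_mem_of_isLattice (K := K) O.toSubmodule Om.toSubmodule
    (Submodule.IsLattice.fg (A := K))
  have smul_mem_range (x : Om) : a • x ∈ (Subalgebra.inclusion hle).range :=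
    ⟨⟨a • (x : B), smul_mem x x.2⟩, rfl⟩
  have inj := Subalgebra.inclusion_injective hle
  exact ⟨finrank_Om ▸ index_range_le_mul_index_range_units inj ha smul_mem_range,
    finrank_O ▸ index_range_units_le_mul_index_range inj ha smul_mem_range⟩

end Lattice

section Order

section Subring

variable {B : Type*} [Ring B] {O Om : Subring B}

lemma unitIndex_eq_index_range_units (hle : O ≤ Om) :
    unitIndex O Om = (Units.map (Subring.inclusion hle : O →* Om)).range.index := by
  let coeUnits (u : Omˣ) : {x : B // x ∈ Om ∧ ∃ v ∈ Om, x * v = 1 ∧ v * x = 1} :=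
    ⟨u, u.1.2, _, u⁻¹.1.2, congrArg Subtype.val u.mul_inv, congrArg Subtype.val u.inv_mul⟩
  have coeUnits_bijective : Function.Bijective coeUnits := by
    refine ⟨fun u v h ↦ Units.ext (Subtype.ext (congrArg (fun x ↦ x.1) h)), ?_⟩
    rintro ⟨x, hx, v, hv, hxv, hvx⟩
    exact ⟨⟨⟨x, hx⟩, ⟨v, hv⟩, Subtype.ext hxv, Subtype.ext hvx⟩, rfl⟩
  refine (Nat.card_congr (Quot.congr (Equiv.ofBijective coeUnits coeUnits_bijective) ?_)).symm
  intro x y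
  rw [QuotientGroup.leftRel_apply]
  constructor
  · rintro ⟨w, hw⟩
    refine ⟨w⁻¹.1, w.1, w⁻¹.1.2, w.1.2, congrArg Subtype.val w.inv_mul,
      congrArg Subtype.val w.mul_inv, ?_⟩
    have x_eq : x = y * Units.map (Subring.inclusion hle : O →* Om) w⁻¹ := by
      rw [map_inv, hw]; group
    exact congrArg (fun u : Omˣ ↦ (u : B)) x_eq
  · rintro ⟨γ, v, hγ, hv, hγv, hvγ, x_eq⟩
    let w : Oˣ := ⟨⟨v, hv⟩, ⟨γ, hγ⟩, Subtype.ext hvγ, Subtype.ext hγv⟩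
    refine ⟨w, eq_inv_mul_of_mul_eq (Units.ext (Subtype.ext ?_))⟩
    have x_eq : (x : B) = y * γ := x_eq
    simp [w, x_eq, mul_assoc, hγv]

lemma relIndex_eq_index_range (hle : O ≤ Om) :
    O.toAddSubgroup.relIndex Om.toAddSubgroup = (Subring.inclusion hle : O →+ Om).range.index := by
  have range_eq : (Subring.inclusion hle : O →+ Om).range =
      O.toAddSubgroup.addSubgroupOf Om.toAddSubgroup := by
    ext x
    exact ⟨fun ⟨y, hy⟩ ↦ hy ▸ y.2, fun hx ↦ ⟨⟨x, hx⟩, rfl⟩⟩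
  rw [range_eq]
  rfl

end Subring

variable {p : ℕ} [Fact p.Prime] {B : Type*} [Ring B] [Algebra ℚ_[p] B] [Algebra ℤ_[p] B]
  [IsScalarTower ℤ_[p] ℚ_[p] B]

lemma IsZpOrder.exists_subalgebra {O : Subring B} (hO : IsZpOrder p O) :
    ∃ S : Subalgebra ℤ_[p] B, S.toSubring = O ∧ Submodule.IsLattice ℚ_[p] S.toSubmodule := by
  obtain ⟨mul_mem, ⟨s, hsO, hs⟩, span_eq_top⟩ := hO
  have algebraMap_eq (c : ℤ_[p]) : algebraMap ℚ_[p] B c = algebraMap ℤ_[p] B c :=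
    (IsScalarTower.algebraMap_apply ℤ_[p] ℚ_[p] B c).symm
  let S : Subalgebra ℤ_[p] B :=
    { O with
      algebraMap_mem' c := by simpa [algebraMap_eq] using mul_mem c 1 O.one_mem }
  refine ⟨S, rfl, ⟨⟨s, le_antisymm (Submodule.span_le.2 hsO) fun x hx ↦ ?_⟩, span_eq_top⟩⟩
  obtain ⟨c, rfl⟩ := hs x hx
  refine Submodule.sum_mem _ fun b hb ↦ ?_
  rw [algebraMap_eq, ← Algebra.smul_def]
  exact Submodule.smul_mem _ _ (Submodule.subset_span hb)

end Order

theorem stmt2_general {p : ℕ} [Fact p.Prime] {B : Type*} [Ring B] [Algebra ℚ_[p] B]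
    {O Om : Subring B} (hO : IsZpOrder p O) (hOm : IsZpOrder p Om) (hle : O ≤ Om) :
    let N := O.toAddSubgroup.relIndex Om.toAddSubgroup
    let C := (Module.finrank ℚ_[p] B + 1) ^ Module.finrank ℚ_[p] B
    N ≤ C * unitIndex O Om ∧ unitIndex O Om ≤ C * N := by
  let : Algebra ℤ_[p] B := Algebra.compHom B (algebraMap ℤ_[p] ℚ_[p])
  have : IsScalarTower ℤ_[p] ℚ_[p] B := IsScalarTower.of_algebraMap_eq fun _ ↦ rfl
  obtain ⟨O, rfl, _⟩ := hO.exists_subalgebra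
  obtain ⟨Om, rfl, _⟩ := hOm.exists_subalgebra
  rw [unitIndex_eq_index_range_units hle, relIndex_eq_index_range hle]
  exact index_range_inclusion_bounds ℚ_[p] hle

lemma rpow_bounds_of_natural_bounds {C N U p : ℕ} (hC : 0 < C) (hp : 1 ≤ p) {ε : ℝ} (hε : 0 ≤ ε)
    (h : N ≤ C * U ∧ U ≤ C * N) :
    (C : ℝ)⁻¹ * (p : ℝ) ^ (-ε) * N ≤ U ∧ (U : ℝ) ≤ C * (p : ℝ) ^ ε * N := by
  have one_le_p : (1 : ℝ) ≤ p := by exact_mod_cast hp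
  have N_le : (N : ℝ) ≤ C * U := by exact_mod_cast h.1
  have U_le : (U : ℝ) ≤ C * N := by exact_mod_cast h.2
  constructor
  · calc (C : ℝ)⁻¹ * (p : ℝ) ^ (-ε) * N ≤ (C : ℝ)⁻¹ * 1 * (C * U) := by
          gcongr
          exact Real.rpow_le_one_of_one_le_of_nonpos one_le_p (neg_nonpos.2 hε)
      _ = U := by field_simp
  · calc (U : ℝ) ≤ C * 1 * N := by rwa [mul_one]
      _ ≤ C * (p : ℝ) ^ ε * N := by
          gcongr
          exact Real.one_le_rpow one_le_p hε

/-- For every `R` and `ε > 0` there is `C > 0`, depending only on `R, ε`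
(and not on `p`, `B` or the orders), such that for all `ℤ_[p]`-orders `𝒪 ⊆ 𝒪ₘ` in an
`R`-dimensional `ℚ_[p]`-algebra `B`,
`C⁻¹ · p^(-ε) · [𝒪ₘ : 𝒪] ≤ [𝒪ₘ^× : 𝒪^×] ≤ C · p^ε · [𝒪ₘ : 𝒪]`. -/
theorem stmt2 (R : ℕ) (ε : ℝ) (hε : 0 < ε) :
    ∃ C : ℝ, 0 < C ∧
      ∀ (p : ℕ) [Fact p.Prime] (B : Type) [Ring B] [Algebra ℚ_[p] B],
        Module.finrank ℚ_[p] B = R →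
        ∀ O Om : Subring B, IsZpOrder p O → IsZpOrder p Om → O ≤ Om →
        C⁻¹ * (p : ℝ) ^ (-ε) * (O.toAddSubgroup.relIndex Om.toAddSubgroup : ℝ) ≤
            (unitIndex O Om : ℝ) ∧
          (unitIndex O Om : ℝ) ≤
            C * (p : ℝ) ^ ε * (O.toAddSubgroup.relIndex Om.toAddSubgroup : ℝ) :=
  ⟨((R + 1) ^ R : ℕ), by positivity, fun _ hp _ _ _ hR _ _ hO hOm hle ↦
    rpow_bounds_of_natural_bounds (by positivity) hp.out.one_le hε.le
      (hR ▸ stmt2_general hO hOm hle)⟩
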